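/- Let T = ℤ^k be a free abelian group of rank k (written multiplicatively), ℤT its integral group ring, M a free ℤT-module of finite rank m, and S ⊆ M a submodule. Then there exist a finite generating set f₁,…,f_l of S and a real constant K > 1 such that: every nonzero g ∈ S with deg(g) ≤ n and |g| ≤ p can be written as g = Σ_{i=1}^l α_i f_i with α_i ∈ ℤT, deg(α_i f_i) ≤ deg(g) for every i with α_i f_i ≠ 0, and Σ_{i=1}^l |α_i| ≤ p·K^{n^{2k}}. -/

import Mathlib

/-- The integral group ring of the free abelian group `ℤ^k`. -/
abbrev LaurentGroupRing (k : ℕ) := MonoidAlgebra ℤ (Multiplicative (Fin k → ℤ))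

/-- `|λ|` : the sum of the absolute values of the integer coefficients. -/
noncomputable def grNorm {k : ℕ} (lam : LaurentGroupRing k) : ℕ :=
  ∑ t ∈ lam.coeff.support, (lam.coeff t).natAbs

/-- `deg λ` : the maximal `ℓ¹`-norm of an exponent vector in the support of `λ`. -/
noncomputable def grDeg {k : ℕ} (lam : LaurentGroupRing k) : ℕ :=
  lam.coeff.support.sup fun t => ∑ i, (Multiplicative.toAdd t i).natAbs

/-- The norm of an element of the free module `(ℤT)^m`. -/
noncomputable def grVecNorm {k m : ℕ} (g : Fin m → LaurentGroupRing k) : ℕ :=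
  ∑ j, grNorm (g j)

/-- The degree of an element of the free module `(ℤT)^m`. -/
noncomputable def grVecDeg {k m : ℕ} (g : Fin m → LaurentGroupRing k) : ℕ :=
  Finset.univ.sup fun j => grDeg (g j)

/-! Order the monomials `t ^ v • e_j` of `(ℤT)^m` by the `ℓ¹`-degree of `v` first. Multiplication
by `t ^ w` does not preserve this order, but it does keep the leading monomial of a vector in the
lead when `w` causes no cancellation with the exponent there. By Dickson's lemma for the conformal
order on exponents and the size of the leading coefficient, finitely many elements of `S` then
suffice to cancel the leading term of any element of `S`. Division by them visits each monomial of
degree at most `deg g` at most once, and there are `O((deg g) ^ k)` of these if `deg g > 0`; each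
step multiplies the norm by a bounded factor. For `deg g = 0 < k` the bound leaves no room for a
constant factor, so a Graver basis of the lattice of constant vectors in `S` is added to the
generators. -/

theorem exists_finite_subset_forall_exists_le {A Q : Type*} [PartialOrder Q]
    [WellQuasiOrderedLE Q] (e : A → Q) (P : Set A) :
    ∃ B ⊆ P, B.Finite ∧ ∀ a ∈ P, ∃ b ∈ B, e b ≤ e a := by
  have hfin : {q | Minimal (· ∈ e '' P) q}.Finite :=
    WellQuasiOrderedLE.finite_of_isAntichain (setOfPred_minimal_antichain _)
  obtain ⟨B, hBP, hBfin, hB⟩ := Set.exists_subset_image_finite_and.1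
    ⟨_, fun _ hq => hq.prop, hfin, rfl⟩
  refine ⟨B, hBP, hBfin, fun a ha => ?_⟩
  obtain ⟨q, hqa, hq⟩ :=
    (Set.isPWO_of_wellQuasiOrderedLE (e '' P)).exists_le_minimal (Set.mem_image_of_mem e ha)
  obtain ⟨b, hb, rfl⟩ : q ∈ e '' B := hB.symm ▸ hq
  exact ⟨b, hb, hqa⟩

section LatticeVectors

variable {ι : Type*} {u v : ι → ℤ}

/-- The positive and negative parts of the coordinates of an integer vector. The relation
`signedParts u ≤ signedParts v` is the conformal order: every coordinate of `u` lies between `0` and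
the corresponding coordinate of `v`. The parts are taken in `ℕ` so that Dickson's lemma applies. -/
def signedParts (v : ι → ℤ) : ι → ℕ × ℕ := fun i => ((v i).toNat, (-v i).toNat)

variable [Fintype ι]

/-- The `ℓ¹`-norm of an integer vector. It measures the degree of a Laurent monomial through its
exponent, and the norm of a vector of constants. -/
def l1Norm (v : ι → ℤ) : ℕ := ∑ i, (v i).natAbs

lemma natAbs_le_l1Norm (v : ι → ℤ) (i : ι) : (v i).natAbs ≤ l1Norm v :=
  Finset.single_le_sum (f := fun i => (v i).natAbs) (fun _ _ => Nat.zero_le _) (Finset.mem_univ i)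

lemma l1Norm_eq_zero : l1Norm v = 0 ↔ v = 0 := by
  simp [l1Norm, funext_iff]

lemma l1Norm_add_le (u v : ι → ℤ) : l1Norm (u + v) ≤ l1Norm u + l1Norm v := by
  simp only [l1Norm, ← Finset.sum_add_distrib]
  exact Finset.sum_le_sum fun i _ => Int.natAbs_add_le _ _

lemma l1Norm_sub_add_l1Norm (h : signedParts u ≤ signedParts v) :
    l1Norm (v - u) + l1Norm u = l1Norm v := by
  simp only [l1Norm, ← Finset.sum_add_distrib, Pi.sub_apply]
  refine Finset.sum_congr rfl fun i _ => ?_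
  have hi : (u i).toNat ≤ (v i).toNat ∧ (-u i).toNat ≤ (-v i).toNat := h i
  omega

/-- A Graver basis works: splitting off a conformally smaller vector never causes cancellation. -/
theorem exists_finite_l1Norm_decomposition (L : AddSubgroup (ι → ℤ)) :
    ∃ B : Set (ι → ℤ), B ⊆ L ∧ B.Finite ∧ ∀ z ∈ L, ∃ U : Multiset (ι → ℤ),
      (∀ u ∈ U, u ∈ B) ∧ U.sum = z ∧ U.card ≤ l1Norm z := by
  obtain ⟨B, hBL, hBfin, hB⟩ :=
    exists_finite_subset_forall_exists_le signedParts {z | z ∈ L ∧ z ≠ 0}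
  refine ⟨B, fun u hu => (hBL hu).1, hBfin, fun z hz => ?_⟩
  induction hn : l1Norm z using Nat.strong_induction_on generalizing z with
  | _ n ih =>
    by_cases hz0 : z = 0
    · exact ⟨0, by simp [hz0]⟩
    obtain ⟨u, huB, hle⟩ := hB z ⟨hz, hz0⟩
    obtain ⟨huL, hu0⟩ := hBL huB
    have hnorm := l1Norm_sub_add_l1Norm hle
    have hupos : l1Norm u ≠ 0 := l1Norm_eq_zero.not.2 hu0
    obtain ⟨U, hUB, hsum, hcard⟩ := ih _ (by omega) (z - u) (L.sub_mem hz huL) rfl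
    refine ⟨u ::ₘ U, by simpa [huB] using hUB, by simp [hsum], ?_⟩
    rw [Multiset.card_cons]
    omega

end LatticeVectors

section Norms

variable {k m : ℕ}

lemma grNorm_eq_sum {a : LaurentGroupRing k} {s : Finset (Multiplicative (Fin k → ℤ))}
    (h : a.coeff.support ⊆ s) : grNorm a = ∑ t ∈ s, (a.coeff t).natAbs :=
  Finsupp.sum_of_support_subset a.coeff h (fun _ c => c.natAbs) (by simp)

@[simp]
lemma grNorm_zero : grNorm (0 : LaurentGroupRing k) = 0 := by
  simp [grNorm]

@[simp]
lemma grNorm_neg (a : LaurentGroupRing k) : grNorm (-a) = grNorm a := by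
  simp [grNorm]

@[simp]
lemma grNorm_single (t : Multiplicative (Fin k → ℤ)) (q : ℤ) :
    grNorm (MonoidAlgebra.single t q : LaurentGroupRing k) = q.natAbs := by
  rw [grNorm_eq_sum (a := MonoidAlgebra.single t q) (s := {t}) Finsupp.support_single_subset]
  simp

lemma grNorm_add_le (a b : LaurentGroupRing k) : grNorm (a + b) ≤ grNorm a + grNorm b := by
  classical
  rw [grNorm_eq_sum (a := a) Finset.subset_union_left,
    grNorm_eq_sum (a := b) Finset.subset_union_right,
    grNorm_eq_sum (a := a + b) Finsupp.support_add, ← Finset.sum_add_distrib]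
  exact Finset.sum_le_sum fun t _ => Int.natAbs_add_le _ _

lemma grNorm_sum_le {ι : Type*} (s : Finset ι) (a : ι → LaurentGroupRing k) :
    grNorm (∑ i ∈ s, a i) ≤ ∑ i ∈ s, grNorm (a i) :=
  Finset.le_sum_of_subadditive grNorm grNorm_zero.le grNorm_add_le s a

lemma grNorm_mul_le (a b : LaurentGroupRing k) : grNorm (a * b) ≤ grNorm a * grNorm b :=
  calc
    grNorm (a * b)
    _ ≤ ∑ s ∈ a.coeff.support, ∑ t ∈ b.coeff.support,
          grNorm (MonoidAlgebra.single (s * t) (a.coeff s * b.coeff t)) := by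
      rw [MonoidAlgebra.mul_def]
      exact (grNorm_sum_le _ _).trans (Finset.sum_le_sum fun _ _ => grNorm_sum_le _ _)
    _ = grNorm a * grNorm b := by
      simp only [grNorm_single, Int.natAbs_mul]
      simp only [grNorm, Finset.sum_mul_sum]

lemma grVecNorm_sub_le (g h : Fin m → LaurentGroupRing k) :
    grVecNorm (g - h) ≤ grVecNorm g + grVecNorm h := by
  simp only [grVecNorm, ← Finset.sum_add_distrib]
  refine Finset.sum_le_sum fun j _ => ?_
  simpa [sub_eq_add_neg] using grNorm_add_le (g j) (-h j)

lemma grVecNorm_smul_le (a : LaurentGroupRing k) (g : Fin m → LaurentGroupRing k) :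
    grVecNorm (a • g) ≤ grNorm a * grVecNorm g := by
  simp only [grVecNorm, Finset.mul_sum]
  exact Finset.sum_le_sum fun j _ => grNorm_mul_le a (g j)

end Norms

/-- A monomial `t ^ exponent • e_index` of the free module `(ℤT)^m`. -/
@[ext]
structure VecMonomial (k m : ℕ) where
  exponent : Fin k → ℤ
  index : Fin m

namespace VecMonomial

variable {k m : ℕ} {x y : VecMonomial k m} {w : Fin k → ℤ}

/-- The sort key of the monomial order: degree first, then the exponent and the index. -/
def sortKey (x : VecMonomial k m) : ℕ ×ₗ Lex (Fin k → ℤ) ×ₗ Fin m :=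
  toLex (l1Norm x.exponent, toLex (toLex x.exponent, x.index))

lemma sortKey_injective : Function.Injective (sortKey (k := k) (m := m)) := fun _ _ h => by
  simp only [sortKey, EmbeddingLike.apply_eq_iff_eq, Prod.mk.injEq] at h
  exact VecMonomial.ext h.2.1 h.2.2

noncomputable instance : LinearOrder (VecMonomial k m) :=
  LinearOrder.lift' sortKey sortKey_injective

instance : AddAction (Fin k → ℤ) (VecMonomial k m) where
  vadd w x := ⟨w + x.exponent, x.index⟩
  zero_vadd _ := VecMonomial.ext (zero_add _) rfl
  add_vadd _ _ _ := VecMonomial.ext (add_assoc _ _ _) rfl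

@[simp]
lemma exponent_vadd (w : Fin k → ℤ) (x : VecMonomial k m) :
    (w +ᵥ x).exponent = w + x.exponent := rfl

@[simp]
lemma index_vadd (w : Fin k → ℤ) (x : VecMonomial k m) : (w +ᵥ x).index = x.index := rfl

lemma le_iff : x ≤ y ↔ l1Norm x.exponent < l1Norm y.exponent ∨
    l1Norm x.exponent = l1Norm y.exponent ∧ (toLex x.exponent < toLex y.exponent ∨
      x.exponent = y.exponent ∧ x.index ≤ y.index) := by
  change sortKey x ≤ sortKey y ↔ _
  simp only [sortKey, Prod.Lex.toLex_le_toLex, toLex_inj]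

lemma l1Norm_exponent_mono (h : x ≤ y) : l1Norm x.exponent ≤ l1Norm y.exponent := by
  rw [le_iff] at h
  omega

/-- No order on the monomials is compatible with all translations, `ℤ^k` being a group; a degree
order is compatible with those that move the larger monomial without cancellation. -/
lemma vadd_le_vadd (hw : l1Norm (w + y.exponent) = l1Norm w + l1Norm y.exponent) (h : x ≤ y) :
    w +ᵥ x ≤ w +ᵥ y := by
  have hx := l1Norm_add_le w x.exponent
  have hdeg := l1Norm_exponent_mono h
  rw [le_iff] at h ⊢
  simp only [exponent_vadd, index_vadd]
  rcases (show l1Norm (w + x.exponent) ≤ l1Norm (w + y.exponent) by omega).lt_or_eq with hlt | heq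
  · exact Or.inl hlt
  · refine Or.inr ⟨heq, ?_⟩
    rcases (h.resolve_left (by omega)).2 with hlex | ⟨hexp, hindex⟩
    · exact Or.inl (add_lt_add_right hlex (toLex w))
    · exact Or.inr ⟨by rw [hexp], hindex⟩

/-- The monomials of degree at most `d`. -/
noncomputable def degreeBall (k m d : ℕ) : Finset (VecMonomial k m) :=
  ((Fintype.piFinset fun _ : Fin k => Finset.Icc (-(d : ℤ)) d) ×ˢ Finset.univ).image
    (fun p => ⟨p.1, p.2⟩) |>.filter fun x => l1Norm x.exponent ≤ d

@[simp]
lemma mem_degreeBall {d : ℕ} : x ∈ degreeBall k m d ↔ l1Norm x.exponent ≤ d := by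
  simp only [degreeBall, Finset.mem_filter, and_iff_right_iff_imp]
  intro hx
  refine Finset.mem_image.2 ⟨(x.exponent, x.index), ?_, rfl⟩
  simp only [Finset.mem_product, Fintype.mem_piFinset, Finset.mem_Icc, Finset.mem_univ, and_true]
  intro i
  have := natAbs_le_l1Norm x.exponent i
  omega

lemma isLowerSet_degreeBall (k m d : ℕ) :
    IsLowerSet (degreeBall k m d : Set (VecMonomial k m)) := fun _ _ hyx hx =>
  mem_degreeBall.2 ((l1Norm_exponent_mono hyx).trans (mem_degreeBall.1 hx))

lemma card_degreeBall_le (k m d : ℕ) : (degreeBall k m d).card ≤ (2 * d + 1) ^ k * m := by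
  refine (Finset.card_filter_le _ _).trans (Finset.card_image_le.trans ?_)
  have hIcc : ((d : ℤ) + 1 + d).toNat = 2 * d + 1 := by omega
  simp [Finset.card_product, Fintype.card_piFinset, hIcc]

lemma card_degreeBall_le_mul_pow (k m : ℕ) {d : ℕ} (hd : d ≠ 0) :
    (degreeBall k m d).card ≤ 3 ^ k * m * d ^ k :=
  calc
    (degreeBall k m d).card ≤ (2 * d + 1) ^ k * m := card_degreeBall_le k m d
    _ ≤ (3 * d) ^ k * m := by gcongr; omega
    _ = 3 ^ k * m * d ^ k := by ring

end VecMonomial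

open VecMonomial

section Coefficients

variable {k m : ℕ} {g : Fin m → LaurentGroupRing k} {s : Set (VecMonomial k m)}

/-- The coefficients of a vector over the group ring with respect to the monomials. -/
def vecCoeff : (Fin m → LaurentGroupRing k) →+ (VecMonomial k m → ℤ) where
  toFun g x := (g x.index).coeff (.ofAdd x.exponent)
  map_zero' := rfl
  map_add' _ _ := rfl

/-- The vectors all of whose monomials belong to `s`. The vectors with leading monomial at most `x`
are those of `vecSupported (Set.Iic x)`. -/
def vecSupported (s : Set (VecMonomial k m)) : AddSubgroup (Fin m → LaurentGroupRing k) where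
  carrier := {g | ∀ x ∉ s, vecCoeff g x = 0}
  zero_mem' _ _ := rfl
  add_mem' hg hh x hx := by simp [hg x hx, hh x hx]
  neg_mem' hg x hx := by simp [hg x hx]

lemma mem_vecSupported : g ∈ vecSupported s ↔ ∀ x ∉ s, vecCoeff g x = 0 := Iff.rfl

lemma vecSupported_mono {t : Set (VecMonomial k m)} (hst : s ⊆ t) :
    vecSupported s ≤ vecSupported t := fun _ hg x hx => hg x fun hxs => hx (hst hxs)

lemma vecSupported_empty : vecSupported (∅ : Set (VecMonomial k m)) = ⊥ := by
  refine (AddSubgroup.eq_bot_iff_forall _).2 fun g hg => funext fun j => ?_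
  ext t
  exact hg ⟨t.toAdd, j⟩ (Set.notMem_empty _)

lemma natAbs_vecCoeff_le_grVecNorm (g : Fin m → LaurentGroupRing k) (x : VecMonomial k m) :
    (vecCoeff g x).natAbs ≤ grVecNorm g := by
  classical
  calc
    (vecCoeff g x).natAbs ≤ grNorm (g x.index) := by
      rw [grNorm_eq_sum (Finset.subset_insert (.ofAdd x.exponent) _)]
      exact Finset.single_le_sum (f := fun t => ((g x.index).coeff t).natAbs)
        (fun _ _ => Nat.zero_le _) (Finset.mem_insert_self _ _)
    _ ≤ grVecNorm g := Finset.single_le_sum (f := fun j => grNorm (g j))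
        (fun _ _ => Nat.zero_le _) (Finset.mem_univ _)

lemma mem_vecSupported_degreeBall {d : ℕ} :
    g ∈ vecSupported (degreeBall k m d : Set (VecMonomial k m)) ↔ grVecDeg g ≤ d := by
  simp only [mem_vecSupported, Finset.mem_coe, mem_degreeBall, grVecDeg, grDeg,
    Finset.sup_le_iff, Finset.mem_univ, true_imp_iff, Finsupp.mem_support_iff]
  exact ⟨fun h j t ht => by_contra fun hd => ht (h ⟨t.toAdd, j⟩ hd),
    fun h x hx => by_contra fun hc => hx (h x.index (.ofAdd x.exponent) hc)⟩

/-- The element `q • t ^ w` of the group ring. -/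
noncomputable abbrev laurentMonomial (w : Fin k → ℤ) (q : ℤ) : LaurentGroupRing k :=
  MonoidAlgebra.single (.ofAdd w) q

lemma vecCoeff_laurentMonomial_smul (w : Fin k → ℤ) (q : ℤ) (g : Fin m → LaurentGroupRing k)
    (x : VecMonomial k m) : vecCoeff (laurentMonomial w q • g) x = q * vecCoeff g (-w +ᵥ x) :=
  MonoidAlgebra.coeff_single_mul_apply _ _ _ _

lemma laurentMonomial_smul_mem_vecSupported_Iic {y : VecMonomial k m} {w : Fin k → ℤ}
    (hg : g ∈ vecSupported (Set.Iic y))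
    (hw : l1Norm (w + y.exponent) = l1Norm w + l1Norm y.exponent) (q : ℤ) :
    laurentMonomial w q • g ∈ vecSupported (Set.Iic (w +ᵥ y)) := fun x hx => by
  have hle : ¬ -w +ᵥ x ≤ y := fun h => hx (by simpa using vadd_le_vadd hw h)
  rw [vecCoeff_laurentMonomial_smul, hg _ hle, mul_zero]

end Coefficients

section BoundedRepresentations

variable {k m : ℕ} {ι : Type*} [Fintype ι] {f : ι → Fin m → LaurentGroupRing k}
  {s t : Set (VecMonomial k m)} {N N' : ℕ} {g h : Fin m → LaurentGroupRing k}

/-- `g` is a combination of the family `f` whose terms are supported in `s` and whose coefficients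
have total norm at most `N`. -/
def HasBoundedRep (f : ι → Fin m → LaurentGroupRing k) (s : Set (VecMonomial k m)) (N : ℕ)
    (g : Fin m → LaurentGroupRing k) : Prop :=
  ∃ α : ι → LaurentGroupRing k,
    g = ∑ i, α i • f i ∧ (∀ i, α i • f i ∈ vecSupported s) ∧ ∑ i, grNorm (α i) ≤ N

namespace HasBoundedRep

lemma mono (hg : HasBoundedRep f s N g) (hst : s ⊆ t) (hN : N ≤ N') : HasBoundedRep f t N' g :=
  let ⟨α, hsum, hsupp, hnorm⟩ := hg
  ⟨α, hsum, fun i => vecSupported_mono hst (hsupp i), hnorm.trans hN⟩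

lemma zero : HasBoundedRep f s 0 0 :=
  ⟨0, by simp [(vecSupported s).zero_mem]⟩

lemma add (hg : HasBoundedRep f s N g) (hh : HasBoundedRep f s N' h) :
    HasBoundedRep f s (N + N') (g + h) := by
  obtain ⟨α, rfl, hα, hαnorm⟩ := hg
  obtain ⟨β, rfl, hβ, hβnorm⟩ := hh
  refine ⟨α + β, ?_, fun i => ?_, ?_⟩
  · simp only [Pi.add_apply, add_smul, Finset.sum_add_distrib]
  · simpa only [Pi.add_apply, add_smul] using (vecSupported s).add_mem (hα i) (hβ i)
  · calc
      ∑ i, grNorm (α i + β i) ≤ ∑ i, (grNorm (α i) + grNorm (β i)) :=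
        Finset.sum_le_sum fun i _ => grNorm_add_le _ _
      _ ≤ N + N' := by rw [Finset.sum_add_distrib]; exact add_le_add hαnorm hβnorm

lemma smul_apply (i : ι) (a : LaurentGroupRing k) (ha : a • f i ∈ vecSupported s) :
    HasBoundedRep f s (grNorm a) (a • f i) := by
  classical
  refine ⟨Pi.single i a, ?_, fun j => ?_, ?_⟩
  · simp [Pi.single_apply, ite_smul]
  · obtain rfl | hj := eq_or_ne j i
    · simpa using ha
    · simp [hj, (vecSupported s).zero_mem]
  · simp [Pi.single_apply, apply_ite grNorm]

lemma multiset_sum {U : Multiset (Fin m → LaurentGroupRing k)} (hUf : ∀ u ∈ U, u ∈ Set.range f)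
    (hUs : ∀ u ∈ U, u ∈ vecSupported s) : HasBoundedRep f s U.card U.sum := by
  induction U using Multiset.induction_on with
  | empty => exact zero
  | cons u U ih =>
    rw [Multiset.forall_mem_cons] at hUf hUs
    obtain ⟨⟨i, rfl⟩, hUf⟩ := hUf
    have hone : grNorm (1 : LaurentGroupRing k) = 1 := grNorm_single 1 1
    have hi := smul_apply (f := f) i 1 (by simpa using hUs.1)
    rw [one_smul, hone] at hi
    rw [Multiset.card_cons, Multiset.sum_cons, add_comm (f i)]
    exact (ih hUf hUs.2).add hi

lemma mem_span (hg : HasBoundedRep f s N g) :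
    g ∈ Submodule.span (LaurentGroupRing k) (Set.range f) := by
  obtain ⟨α, rfl, -, -⟩ := hg
  exact Submodule.sum_mem _ fun i _ => Submodule.smul_mem _ _ (Submodule.subset_span ⟨i, rfl⟩)

end HasBoundedRep

end BoundedRepresentations

section GroebnerBases

variable {k m : ℕ} {S : Submodule (LaurentGroupRing k) (Fin m → LaurentGroupRing k)}

/-- A strong Gröbner basis of `S` for the degree order of `VecMonomial`: the leading term of every
element of `S` is that of a monomial multiple of an element of `F`. Since multiplication by a
monomial need not preserve leading monomials, the multiple is required to have the right one. -/
structure IsGroebnerBasis (S : Submodule (LaurentGroupRing k) (Fin m → LaurentGroupRing k))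
    (F : Set (Fin m → LaurentGroupRing k)) : Prop where
  subset : F ⊆ S
  exists_leading_eq : ∀ g ∈ S, ∀ x, g ∈ vecSupported (Set.Iic x) → vecCoeff g x ≠ 0 →
    ∃ f ∈ F, ∃ (w : Fin k → ℤ) (q : ℤ), laurentMonomial w q • f ∈ vecSupported (Set.Iic x) ∧
      vecCoeff (laurentMonomial w q • f) x = vecCoeff g x

lemma IsGroebnerBasis.mono {F E : Set (Fin m → LaurentGroupRing k)} (hF : IsGroebnerBasis S F)
    (hFE : F ⊆ E) (hES : E ⊆ S) : IsGroebnerBasis S E where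
  subset := hES
  exists_leading_eq g hg x hgx hx :=
    let ⟨f, hf, hlead⟩ := hF.exists_leading_eq g hg x hgx hx
    ⟨f, hFE hf, hlead⟩

lemma exists_forall_vecCoeff_dvd
    (S : Submodule (LaurentGroupRing k) (Fin m → LaurentGroupRing k)) (x : VecMonomial k m) :
    ∃ h ∈ S, h ∈ vecSupported (Set.Iic x) ∧
      ∀ g ∈ S, g ∈ vecSupported (Set.Iic x) → vecCoeff h x ∣ vecCoeff g x := by
  let leadingCoeffs : AddSubgroup ℤ :=
    (S.toAddSubgroup ⊓ vecSupported (Set.Iic x)).map ((Pi.evalAddMonoidHom _ x).comp vecCoeff)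
  obtain ⟨d, hd⟩ := AddSubgroup.isAddCyclic_iff_exists_zmultiples_eq_top leadingCoeffs |>.1
    inferInstance
  obtain ⟨h, ⟨hS, hx⟩, rfl⟩ : d ∈ leadingCoeffs := hd ▸ AddSubgroup.mem_zmultiples d
  refine ⟨h, hS, hx, fun g hgS hgx => Int.mem_zmultiples_iff.1 ?_⟩
  exact hd.symm ▸ AddSubgroup.mem_map_of_mem _ (show g ∈ S.toAddSubgroup ⊓ _ from ⟨hgS, hgx⟩)

theorem exists_finite_isGroebnerBasis
    (S : Submodule (LaurentGroupRing k) (Fin m → LaurentGroupRing k)) :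
    ∃ F : Set (Fin m → LaurentGroupRing k), F.Finite ∧ IsGroebnerBasis S F := by
  have : WellQuasiOrderedLE (Finset (Fin m)) := Finite.to_wellQuasiOrderedLE
  -- Inclusion of singletons compares the indices for equality.
  obtain ⟨B, hBP, hBfin, hB⟩ := exists_finite_subset_forall_exists_le
    (fun a : VecMonomial k m × (Fin m → LaurentGroupRing k) =>
      (signedParts a.1.exponent, ({a.1.index} : Finset (Fin m)), (vecCoeff a.2 a.1).natAbs))
    {a | a.2 ∈ S ∧ a.2 ∈ vecSupported (Set.Iic a.1) ∧ vecCoeff a.2 a.1 ≠ 0}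
  refine ⟨Prod.snd '' B, hBfin.image _, ?_, fun g hg x hgx hgx0 => ?_⟩
  · rintro _ ⟨b, hb, rfl⟩
    exact (hBP hb).1
  · obtain ⟨h, hhS, hhx, hdvd⟩ := exists_forall_vecCoeff_dvd S x
    have hhx0 : vecCoeff h x ≠ 0 := fun h0 => hgx0 (zero_dvd_iff.1 (h0 ▸ hdvd g hg hgx))
    obtain ⟨⟨y, f⟩, hb, hconf, hindex, hsize⟩ := hB (x, h) ⟨hhS, hhx, hhx0⟩
    obtain ⟨hfS, hfy, hfy0⟩ := hBP hb
    set w := x.exponent - y.exponent with hw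
    have hx : w +ᵥ y = x :=
      VecMonomial.ext (sub_add_cancel _ _) (Finset.singleton_subset_singleton.1 hindex)
    have hlead (q : ℤ) : laurentMonomial w q • f ∈ vecSupported (Set.Iic x) := by
      rw [← hx]
      refine laurentMonomial_smul_mem_vecSupported_Iic hfy ?_ q
      rw [hw, sub_add_cancel, l1Norm_sub_add_l1Norm hconf]
    have hcoeff (q : ℤ) : vecCoeff (laurentMonomial w q • f) x = q * vecCoeff f y := by
      rw [vecCoeff_laurentMonomial_smul, ← hx, neg_vadd_vadd]
    have hdvd_f : vecCoeff h x ∣ vecCoeff f y := by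
      simpa [hcoeff] using hdvd _ (S.smul_mem _ hfS) (hlead 1)
    have hf_dvd : vecCoeff f y ∣ vecCoeff h x := Int.natAbs_dvd_natAbs.1 <| dvd_of_eq <|
      hsize.antisymm (Int.natAbs_le_of_dvd_ne_zero hdvd_f hfy0)
    obtain ⟨q, hq⟩ := hf_dvd.trans (hdvd g hg hgx)
    exact ⟨f, ⟨_, hb, rfl⟩, w, q, hlead q, by rw [hcoeff, hq, mul_comm]⟩

variable {ι : Type*} [Fintype ι] {f : ι → Fin m → LaurentGroupRing k} {C : ℕ}

lemma IsGroebnerBasis.exists_hasBoundedRep_vecCoeff_eq (hf : IsGroebnerBasis S (Set.range f))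
    (hC : ∀ i, grVecNorm (f i) ≤ C) {g : Fin m → LaurentGroupRing k} (hg : g ∈ S)
    {x : VecMonomial k m} (hgx : g ∈ vecSupported (Set.Iic x)) :
    ∃ h ∈ S, h ∈ vecSupported (Set.Iic x) ∧ vecCoeff h x = vecCoeff g x ∧
      grVecNorm h ≤ grVecNorm g * C ∧ HasBoundedRep f (Set.Iic x) (grVecNorm g) h := by
  by_cases hx0 : vecCoeff g x = 0
  · refine ⟨0, S.zero_mem, zero_mem _, hx0.symm, by simp [grVecNorm], ?_⟩
    exact HasBoundedRep.zero.mono subset_rfl (Nat.zero_le _)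
  obtain ⟨_, ⟨i, rfl⟩, w, q, hlead, hcoeff⟩ := hf.exists_leading_eq g hg x hgx hx0
  have hq : q.natAbs ≤ grVecNorm g := by
    refine le_trans ?_ (natAbs_vecCoeff_le_grVecNorm g x)
    rw [← hcoeff, vecCoeff_laurentMonomial_smul] at hx0 ⊢
    exact Int.natAbs_le_of_dvd_ne_zero (dvd_mul_right _ _) hx0
  rw [← grNorm_single (.ofAdd w) q] at hq
  exact ⟨_, S.smul_mem _ (hf.subset ⟨i, rfl⟩), hlead, hcoeff,
    (grVecNorm_smul_le _ _).trans (Nat.mul_le_mul hq (hC i)),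
    (HasBoundedRep.smul_apply i _ hlead).mono subset_rfl hq⟩

/-- Each of the at most `#s` reduction steps multiplies the norm of the remainder by at most
`1 + C`. -/
theorem IsGroebnerBasis.hasBoundedRep (hf : IsGroebnerBasis S (Set.range f))
    (hC : ∀ i, grVecNorm (f i) ≤ C) {s : Finset (VecMonomial k m)}
    (hs : IsLowerSet (s : Set (VecMonomial k m))) {g : Fin m → LaurentGroupRing k} (hg : g ∈ S)
    (hgs : g ∈ vecSupported (s : Set (VecMonomial k m))) :
    HasBoundedRep f (s : Set (VecMonomial k m)) (grVecNorm g * (2 + C) ^ s.card) g := by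
  induction s using Finset.induction_on_max generalizing g with
  | empty =>
    rw [Finset.coe_empty, vecSupported_empty, AddSubgroup.mem_bot] at hgs
    exact hgs ▸ HasBoundedRep.zero.mono subset_rfl (Nat.zero_le _)
  | insert x s hlt ih =>
    have hs_eq : (↑(insert x s) : Set (VecMonomial k m)) = Set.Iic x := by
      refine Set.Subset.antisymm (fun y hy => ?_) fun y hy => hs hy (Finset.mem_insert_self x s)
      exact (Finset.mem_insert.1 hy).elim le_of_eq fun hys => (hlt y hys).le
    have hs_lower : IsLowerSet (s : Set (VecMonomial k m)) := fun y z hzy hy =>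
      (Finset.mem_insert.1 (hs hzy (Finset.mem_insert_of_mem hy))).resolve_left
        (hzy.trans_lt (hlt y hy)).ne
    rw [hs_eq] at hgs ⊢
    obtain ⟨h, hhS, hhx, hcoeff, hnorm, hrep⟩ := hf.exists_hasBoundedRep_vecCoeff_eq hC hg hgs
    have hrem : g - h ∈ vecSupported (s : Set (VecMonomial k m)) := fun y hys => by
      obtain rfl | hyx := eq_or_ne y x
      · simp [hcoeff]
      · refine (vecSupported (Set.Iic x)).sub_mem hgs hhx y fun hy => ?_
        exact hys ((Finset.mem_insert.1 (hs_eq.ge hy)).resolve_left hyx)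
    have hsub : (s : Set (VecMonomial k m)) ⊆ Set.Iic x := fun y hy => (hlt y hy).le
    have hrep_rem := (ih hs_lower (S.sub_mem hg hhS) hrem).mono hsub le_rfl
    rw [← sub_add_cancel g h]
    refine (hrep_rem.add hrep).mono subset_rfl ?_
    rw [sub_add_cancel, Finset.card_insert_of_notMem fun hx => (hlt x hx).false]
    calc
      grVecNorm (g - h) * (2 + C) ^ s.card + grVecNorm g
      _ ≤ (grVecNorm g + grVecNorm g * C) * (2 + C) ^ s.card + grVecNorm g * (2 + C) ^ s.card := by
        gcongr
        · exact (grVecNorm_sub_le g h).trans (by gcongr)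
        · exact Nat.le_mul_of_pos_right _ (by positivity)
      _ = grVecNorm g * (2 + C) ^ (s.card + 1) := by ring

lemma IsGroebnerBasis.hasBoundedRep_degreeBall (hf : IsGroebnerBasis S (Set.range f))
    (hC : ∀ i, grVecNorm (f i) ≤ C) {g : Fin m → LaurentGroupRing k} (hg : g ∈ S) {d : ℕ}
    (hd : d ≠ 0) (hgd : grVecDeg g ≤ d) :
    HasBoundedRep f (degreeBall k m d : Set (VecMonomial k m))
      (grVecNorm g * ((2 + C) ^ (3 ^ k * m)) ^ d ^ k) g := by
  refine (hf.hasBoundedRep hC (isLowerSet_degreeBall k m d) hg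
    (mem_vecSupported_degreeBall.2 hgd)).mono subset_rfl ?_
  rw [← pow_mul]
  gcongr
  · omega
  · exact card_degreeBall_le_mul_pow k m hd

end GroebnerBases

section Constants

variable {k m : ℕ}

/-- The vector over the group ring with constant entries `z`. -/
noncomputable def constVec : (Fin m → ℤ) →+ (Fin m → LaurentGroupRing k) :=
  (Int.castAddHom (LaurentGroupRing k)).compLeft (Fin m)

lemma grVecNorm_constVec (z : Fin m → ℤ) :
    grVecNorm (constVec z : Fin m → LaurentGroupRing k) = l1Norm z :=
  Finset.sum_congr rfl fun j _ => grNorm_single 1 (z j)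

lemma vecCoeff_constVec_of_exponent_ne_zero (z : Fin m → ℤ) {x : VecMonomial k m}
    (hx : x.exponent ≠ 0) : vecCoeff (constVec z) x = 0 :=
  Finsupp.single_eq_of_ne hx

lemma grVecDeg_eq_zero_iff {g : Fin m → LaurentGroupRing k} :
    grVecDeg g = 0 ↔ g ∈ Set.range constVec := by
  rw [← Nat.le_zero, ← mem_vecSupported_degreeBall, mem_vecSupported]
  simp only [Finset.mem_coe, mem_degreeBall, Nat.le_zero, l1Norm_eq_zero]
  constructor
  · intro hg
    let z : Fin m → ℤ := fun j => (g j).coeff 1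
    refine ⟨z, funext fun j => ?_⟩
    ext t
    obtain rfl | ht := eq_or_ne t 1
    · exact Finsupp.single_eq_same
    · let x : VecMonomial k m := ⟨t.toAdd, j⟩
      exact (vecCoeff_constVec_of_exponent_ne_zero z (x := x) ht).trans (hg x ht).symm
  · rintro ⟨z, rfl⟩ x hx
    exact vecCoeff_constVec_of_exponent_ne_zero z hx

theorem exists_finite_hasBoundedRep_of_grVecDeg_eq_zero
    (S : Submodule (LaurentGroupRing k) (Fin m → LaurentGroupRing k)) :
    ∃ H : Set (Fin m → LaurentGroupRing k), H ⊆ S ∧ H.Finite ∧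
      ∀ {ι : Type*} [Fintype ι] (f : ι → Fin m → LaurentGroupRing k), H ⊆ Set.range f →
        ∀ g ∈ S, grVecDeg g = 0 →
          HasBoundedRep f (degreeBall k m 0 : Set (VecMonomial k m)) (grVecNorm g) g := by
  obtain ⟨B, hBS, hBfin, hB⟩ :=
    exists_finite_l1Norm_decomposition (S.toAddSubgroup.comap constVec)
  refine ⟨constVec '' B, Set.image_subset_iff.2 hBS, hBfin.image _, fun f hf g hg hdeg => ?_⟩
  obtain ⟨z, rfl⟩ := grVecDeg_eq_zero_iff.1 hdeg
  obtain ⟨U, hUB, rfl, hcard⟩ := hB z hg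
  rw [map_multiset_sum]
  refine (HasBoundedRep.multiset_sum ?_ ?_).mono subset_rfl ?_
  · simpa using fun u hu => hf ⟨u, hUB u hu, rfl⟩
  · simpa [mem_vecSupported_degreeBall] using fun u _ => grVecDeg_eq_zero_iff.2 ⟨u, rfl⟩
  · rw [Multiset.card_map, ← map_multiset_sum, grVecNorm_constVec]
    exact hcard

end Constants

theorem division_group_ring_general (k m : ℕ)
    (S : Submodule (LaurentGroupRing k) (Fin m → LaurentGroupRing k)) :
    ∃ (l : ℕ) (f : Fin l → (Fin m → LaurentGroupRing k)) (K : ℝ), 1 < K ∧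
      Submodule.span (LaurentGroupRing k) (Set.range f) = S ∧
      ∀ g ∈ S, ∃ α : Fin l → LaurentGroupRing k,
        g = ∑ i, α i • f i ∧
        (∀ i, grVecDeg (α i • f i) ≤ grVecDeg g) ∧
        ((∑ i, grNorm (α i) : ℕ) : ℝ) ≤ grVecNorm g * K ^ (grVecDeg g ^ k) := by
  obtain ⟨G, hGfin, hG⟩ := exists_finite_isGroebnerBasis S
  obtain ⟨H, hHS, hHfin, hH⟩ := exists_finite_hasBoundedRep_of_grVecDeg_eq_zero S
  obtain ⟨l, f, -, hf⟩ := (hGfin.union hHfin).fin_param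
  have hGf : IsGroebnerBasis S (Set.range f) :=
    hG.mono (hf ▸ Set.subset_union_left) (hf ▸ Set.union_subset hG.subset hHS)
  obtain ⟨C, hC⟩ := (Set.finite_range fun i => grVecNorm (f i)).bddAbove
  let K : ℕ := (2 + C) ^ (3 ^ k * m) + 1
  have hK : 1 < K := Nat.lt_add_of_pos_left (by positivity)
  have hrep : ∀ g ∈ S, HasBoundedRep f (degreeBall k m (grVecDeg g) : Set (VecMonomial k m))
      (grVecNorm g * K ^ (grVecDeg g ^ k)) g := by
    intro g hg
    by_cases hdeg : grVecDeg g = 0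
    · rw [hdeg]
      exact (hH f (hf ▸ Set.subset_union_right) g hg hdeg).mono subset_rfl
        (Nat.le_mul_of_pos_right _ (by positivity))
    · refine (hGf.hasBoundedRep_degreeBall (fun i => hC ⟨i, rfl⟩) hg hdeg le_rfl).mono
        subset_rfl ?_
      gcongr
      exact Nat.le_succ _
  refine ⟨l, f, K, by exact_mod_cast hK, ?_, fun g hg => ?_⟩
  · exact (Submodule.span_le.2 hGf.subset).antisymm fun g hg => (hrep g hg).mem_span
  · obtain ⟨α, hsum, hsupp, hnorm⟩ := hrep g hg
    exact ⟨α, hsum, fun i => mem_vecSupported_degreeBall.1 (hsupp i), by exact_mod_cast hnorm⟩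

/-- Effective division bound for submodules of a free module of finite
rank over the integral group ring of the free abelian group `T = ℤ^k`. -/
theorem division_group_ring (k m : ℕ)
    (S : Submodule (LaurentGroupRing k) (Fin m → LaurentGroupRing k)) :
    ∃ (l : ℕ) (f : Fin l → (Fin m → LaurentGroupRing k)) (K : ℝ), 1 < K ∧
      Submodule.span (LaurentGroupRing k) (Set.range f) = S ∧
      ∀ (n p : ℕ) (g : Fin m → LaurentGroupRing k), g ∈ S → g ≠ 0 →
        grVecDeg g ≤ n → grVecNorm g ≤ p →
        ∃ α : Fin l → LaurentGroupRing k,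
          g = ∑ i, α i • f i ∧
          (∀ i, α i • f i ≠ 0 → grVecDeg (α i • f i) ≤ grVecDeg g) ∧
          ((∑ i, grNorm (α i) : ℕ) : ℝ) ≤ (p : ℝ) * K ^ (n ^ (2 * k)) := by
  obtain ⟨l, f, K, hK, hspan, hrep⟩ := division_group_ring_general k m S
  refine ⟨l, f, K, hK, hspan, fun n p g hg _ hn hp => ?_⟩
  obtain ⟨α, hsum, hdeg, hnorm⟩ := hrep g hg
  have hexp : grVecDeg g ^ k ≤ n ^ (2 * k) := (Nat.pow_le_pow_left hn k).trans <| by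
    rw [mul_comm, pow_mul]
    exact Nat.le_self_pow two_ne_zero _
  exact ⟨α, hsum, fun i _ => hdeg i, hnorm.trans (by gcongr; exact hK.le)⟩
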